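/- Fix an integer d ≥ 2, let a ∈ [1/2, 1] and b ∈ [0, 2(1−a)/d]. Then the OO-invariant matrix ρ = (2a/(d(d−1)))·W₋ + b·Φ_d + ((1−a−b)/(d(d+1)/2 − 1))·(𝟙 − Φ_d − W₋) lies in the convex hull, taken in the real vector space of (d²)×(d²) complex matrices, of the Werner orbit orb_wer(ψ_a) = { |(U⊗U)ψ_a⟩⟨(U⊗U)ψ_a| : U a d×d unitary }. -/

import Mathlib

open scoped BigOperators

/-!
Averaging a point of the convex hull of a Werner orbit over the finite group of signed permutation
matrices `U`, acting by `A ↦ (U ⊗ U) A (U ⊗ U)*`, stays in the hull and keeps the expectations of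
`𝟙`, `W`, `Φ` and `Q = ∑ᵢ |ii⟩⟨ii|`. These four expectations determine an invariant operator: sign
flips kill every entry `A (i, j) (k, l)` in which the indices do not pair up, and permutations make
the remaining entries constant on each pairing pattern. The state `ρ` is invariant as well, so it
suffices to find some point of the hull having the same four expectations as `ρ`.

The expectations of `𝟙` and `W` are constant on the orbit and agree with those of `ρ`. Those of `Φ`
and `Q` at `(U ⊗ U)ψ` depend only on the two columns `u`, `v` of `U` that `ψ` involves. Let `w` be
isotropic (`∑ wᵢ² = 0`) with unimodular entries on an index set `s` and zero entries off `s`. Taking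
basis vectors for `u`, `v`, then `(|w|, w²)` and `(w, w̄)` up to normalisation, for `s` either
everything or a pair, gives points of the `(Φ, Q)`-plane whose convex hull contains the required
one.
-/

open Matrix
open scoped Kronecker

theorem exists_mem_invariants_of_convex {G V : Type*} [Group G] [Finite G] [AddCommGroup V]
    [Module ℝ V] (ρ : Representation ℝ G V) {s : Set V} (hs : Convex ℝ s)
    (hρ : ∀ g, Set.MapsTo (ρ g) s s) (hne : s.Nonempty) : ∃ w ∈ s, w ∈ ρ.invariants := by
  obtain ⟨v, hv⟩ := hne
  have := Fintype.ofFinite G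
  have hcard : (Fintype.card G : ℝ) ≠ 0 := Nat.cast_ne_zero.mpr Fintype.card_ne_zero
  have := invertibleOfNonzero hcard
  refine ⟨ρ.averageMap v, ?_, ρ.averageMap_invariant v⟩
  have havg : ρ.averageMap v = ∑ g : G, (Fintype.card G : ℝ)⁻¹ • ρ g v := by
    simp [GroupAlgebra.average, Finset.smul_sum]
  rw [havg]
  exact hs.sum_mem (fun _ _ => by positivity) (by simp) fun g _ => hρ g hv

section Expectation

variable {m : Type*} [Fintype m]

/-- The expectation `A ↦ tr(X A)` of an observable `X`. -/
noncomputable def expect (X : Matrix m m ℂ) : Matrix m m ℂ →ₗ[ℝ] ℂ :=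
  traceLinearMap m ℝ ℂ ∘ₗ LinearMap.mulLeft ℝ X

theorem expect_apply (X A : Matrix m m ℂ) : expect X A = (X * A).trace :=
  rfl

theorem expect_vecMulVec (X : Matrix m m ℂ) (v w : m → ℂ) :
    expect X (vecMulVec v w) = (X *ᵥ v) ⬝ᵥ w := by
  rw [expect_apply, mul_vecMulVec, trace_vecMulVec]

end Expectation

section WernerRepresentation

variable {n : Type*} [Fintype n] [DecidableEq n]

variable (n) in
/-- The action `U ↦ (A ↦ (U ⊗ U) A (U ⊗ U)*)` of the unitary group on bipartite operators, whose
orbits are the Werner orbits. -/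
noncomputable def wernerRep : Representation ℝ (unitaryGroup n ℂ) (Matrix (n × n) (n × n) ℂ) where
  toFun U := LinearMap.mulLeftRight ℝ ((U.1 ⊗ₖ U.1 : Matrix (n × n) (n × n) ℂ), (U.1 ⊗ₖ U.1)ᴴ)
  map_one' := by ext; simp
  map_mul' U V := by
    ext1 A
    simp [mul_kronecker_mul, Matrix.mul_assoc]

theorem wernerRep_apply (U : unitaryGroup n ℂ) (A : Matrix (n × n) (n × n) ℂ) :
    wernerRep n U A = (U.1 ⊗ₖ U.1) * A * (U.1 ⊗ₖ U.1)ᴴ :=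
  rfl

theorem conjTranspose_kronecker_mul_kronecker_self (U : unitaryGroup n ℂ) :
    (U.1 ⊗ₖ U.1)ᴴ * (U.1 ⊗ₖ U.1) = 1 :=
  Unitary.star_mul_self_of_mem (kronecker_mem_unitary U.2 U.2)

theorem trace_wernerRep (U : unitaryGroup n ℂ) (A : Matrix (n × n) (n × n) ℂ) :
    (wernerRep n U A).trace = A.trace := by
  rw [wernerRep_apply, trace_mul_cycle, conjTranspose_kronecker_mul_kronecker_self, Matrix.one_mul]

theorem wernerRep_mul (U : unitaryGroup n ℂ) (A B : Matrix (n × n) (n × n) ℂ) :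
    wernerRep n U (A * B) = wernerRep n U A * wernerRep n U B := by
  calc (U.1 ⊗ₖ U.1) * (A * B) * (U.1 ⊗ₖ U.1)ᴴ
      = (U.1 ⊗ₖ U.1) * A * ((U.1 ⊗ₖ U.1)ᴴ * (U.1 ⊗ₖ U.1)) * B * (U.1 ⊗ₖ U.1)ᴴ := by
        rw [conjTranspose_kronecker_mul_kronecker_self, Matrix.mul_one, Matrix.mul_assoc _ A B]
    _ = wernerRep n U A * wernerRep n U B := by
        simp only [wernerRep_apply, Matrix.mul_assoc]

theorem expect_wernerRep {U : unitaryGroup n ℂ} {X : Matrix (n × n) (n × n) ℂ}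
    (hX : wernerRep n U X = X) (A : Matrix (n × n) (n × n) ℂ) :
    expect X (wernerRep n U A) = expect X A := by
  simp only [expect_apply]
  conv_lhs => rw [← hX, ← wernerRep_mul, trace_wernerRep]

theorem wernerRep_vecMulVec (U : unitaryGroup n ℂ) (ψ : n × n → ℂ) :
    wernerRep n U (vecMulVec ψ (star ψ)) =
      vecMulVec ((U.1 ⊗ₖ U.1) *ᵥ ψ) (star ((U.1 ⊗ₖ U.1) *ᵥ ψ)) := by
  rw [wernerRep_apply, mul_vecMulVec, vecMulVec_mul, star_mulVec]

/-- The pure states `(U ⊗ U)ψ`, as rank-one operators. -/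
def wernerOrbit (ψ : n × n → ℂ) : Set (Matrix (n × n) (n × n) ℂ) :=
  {A | ∃ U : unitaryGroup n ℂ,
    A = vecMulVec ((U.1 ⊗ₖ U.1) *ᵥ ψ) (star ((U.1 ⊗ₖ U.1) *ᵥ ψ))}

theorem mapsTo_wernerRep_convexHull_wernerOrbit (ψ : n × n → ℂ) (U : unitaryGroup n ℂ) :
    Set.MapsTo (wernerRep n U) (convexHull ℝ (wernerOrbit ψ)) (convexHull ℝ (wernerOrbit ψ)) := by
  rw [Set.mapsTo_iff_image_subset, LinearMap.image_convexHull]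
  refine convexHull_mono ?_
  rintro _ ⟨_, ⟨V, rfl⟩, rfl⟩
  exact ⟨U * V, by simp only [← wernerRep_vecMulVec, map_mul, Module.End.mul_apply]⟩

theorem expect_eq_of_mem_convexHull_wernerOrbit {X : Matrix (n × n) (n × n) ℂ}
    (hX : ∀ U, wernerRep n U X = X) {ψ : n × n → ℂ} {A : Matrix (n × n) (n × n) ℂ}
    (hA : A ∈ convexHull ℝ (wernerOrbit ψ)) : expect X A = expect X (vecMulVec ψ (star ψ)) := by
  refine convexHull_min ?_ ((convex_singleton _).linear_preimage (expect X)) hA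
  rintro _ ⟨U, rfl⟩
  rw [← wernerRep_vecMulVec]
  exact expect_wernerRep (hX U) _

end WernerRepresentation

section SignedPermutations

variable {n : Type*} [Fintype n] [DecidableEq n]

variable (n) in
/-- Diagonal sign matrices, as unitaries. -/
noncomputable def signUnitary : (n → ℤˣ) →* unitaryGroup n ℂ where
  toFun ε := ⟨diagonal fun i => ((ε i : ℤ) : ℂ), by
    simp [mem_unitaryGroup_iff, star_eq_conjTranspose, diagonal_conjTranspose, ← Int.cast_mul,
      ← Units.val_mul]⟩
  map_one' := by ext; simp
  map_mul' ε δ := by ext; simp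

variable (n) in
/-- Permutation matrices, as unitaries. -/
noncomputable def permUnitary : Equiv.Perm n →* unitaryGroup n ℂ :=
  (permMatrixHom (R := ℂ)).codRestrict _ fun σ => by
    simp [mem_unitaryGroup_iff, star_eq_conjTranspose, ← permMatrix_mul]

theorem wernerRep_signUnitary_apply (ε : n → ℤˣ) (A : Matrix (n × n) (n × n) ℂ) (i j k l : n) :
    wernerRep n (signUnitary n ε) A (i, j) (k, l) =
      ((ε i * ε j * (ε k * ε l) : ℤˣ) : ℤ) * A (i, j) (k, l) := by
  calc wernerRep n (signUnitary n ε) A (i, j) (k, l)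
      = ((ε i : ℤ) * (ε j : ℤ)) * A (i, j) (k, l) * ((ε k : ℤ) * (ε l : ℤ)) := by
        simp [wernerRep_apply, signUnitary, diagonal_kronecker_diagonal]
    _ = ((ε i * ε j * (ε k * ε l) : ℤˣ) : ℤ) * A (i, j) (k, l) := by
        push_cast
        ring

theorem wernerRep_permUnitary_apply (σ : Equiv.Perm n) (A : Matrix (n × n) (n × n) ℂ)
    (i j k l : n) :
    wernerRep n (permUnitary n σ) A (i, j) (k, l) =
      A (σ⁻¹ i, σ⁻¹ j) (σ⁻¹ k, σ⁻¹ l) := by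
  have hσ : (permUnitary n σ).1 ⊗ₖ (permUnitary n σ).1 =
      Equiv.Perm.permMatrix ℂ (Equiv.prodCongr σ σ : Equiv.Perm (n × n))⁻¹ := by
    ext ⟨i, j⟩ ⟨k, l⟩
    simp [permUnitary, PEquiv.toMatrix_apply, Equiv.Perm.inv_def, ← ite_and, and_comm]
  rw [wernerRep_apply, hσ, conjTranspose_permMatrix, inv_inv, PEquiv.toMatrix_toPEquiv_mul,
    PEquiv.mul_toMatrix_toPEquiv]
  rfl

end SignedPermutations

section Twirl

variable {n : Type*} [Fintype n] [DecidableEq n]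

variable (n) in
/-- The bipartite operators commuting with `U ⊗ U` for every signed permutation matrix `U`. -/
noncomputable def signedPermInvariants : Submodule ℝ (Matrix (n × n) (n × n) ℂ) :=
  Representation.invariants ((wernerRep n).comp (signUnitary n)) ⊓
    Representation.invariants ((wernerRep n).comp (permUnitary n))

theorem mem_signedPermInvariants {A : Matrix (n × n) (n × n) ℂ} :
    A ∈ signedPermInvariants n ↔ (∀ ε, wernerRep n (signUnitary n ε) A = A) ∧
      ∀ σ, wernerRep n (permUnitary n σ) A = A :=
  Iff.rfl

theorem wernerRep_signUnitary_permUnitary (ε : n → ℤˣ) (σ : Equiv.Perm n)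
    (A : Matrix (n × n) (n × n) ℂ) :
    wernerRep n (signUnitary n ε) (wernerRep n (permUnitary n σ) A) =
      wernerRep n (permUnitary n σ) (wernerRep n (signUnitary n (ε ∘ σ)) A) := by
  ext ⟨i, j⟩ ⟨k, l⟩
  simp [wernerRep_signUnitary_apply, wernerRep_permUnitary_apply]

theorem exists_mem_signedPermInvariants {K : Set (Matrix (n × n) (n × n) ℂ)} (hK : Convex ℝ K)
    (hmaps : ∀ U, Set.MapsTo (wernerRep n U) K K) {A : Matrix (n × n) (n × n) ℂ} (hA : A ∈ K) :
    ∃ B ∈ K, B ∈ signedPermInvariants n ∧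
      ∀ X ∈ signedPermInvariants n, expect X B = expect X A := by
  let L := K ∩ ⋂ X ∈ signedPermInvariants n, expect X ⁻¹' {expect X A}
  have hL : Convex ℝ L :=
    hK.inter <| convex_iInter₂ fun X _ => (convex_singleton _).linear_preimage (expect X)
  have hmem {U} (hU : ∀ X ∈ signedPermInvariants n, wernerRep n U X = X) {B} (hB : B ∈ L) :
      wernerRep n U B ∈ L :=
    ⟨hmaps U hB.1, Set.mem_iInter₂.2 fun X hX =>
      (expect_wernerRep (hU X hX) B).trans (Set.mem_iInter₂.1 hB.2 X hX)⟩
  -- Average over the signs first: permutations normalise the sign matrices, so averaging over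
  -- permutations afterwards keeps the sign invariance.
  obtain ⟨B, hBL, hB⟩ := exists_mem_invariants_of_convex ((wernerRep n).comp (signUnitary n)) hL
    (fun ε _ => hmem fun X hX => hX.1 ε) ⟨A, hA, by simp⟩
  obtain ⟨C, ⟨hCL, hCsign⟩, hCperm⟩ := exists_mem_invariants_of_convex
    ((wernerRep n).comp (permUnitary n))
    (hL.inter (Representation.invariants ((wernerRep n).comp (signUnitary n))).convex)
    (fun σ C hC => ⟨hmem (fun X hX => hX.2 σ) hC.1, fun ε =>
      (wernerRep_signUnitary_permUnitary ε σ C).trans (congrArg _ (hC.2 (ε ∘ σ)))⟩)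
    ⟨B, hBL, hB⟩
  exact ⟨C, hCL.1, ⟨hCsign, hCperm⟩, Set.mem_iInter₂.1 hCL.2⟩

end Twirl

theorem exists_sign_mul_eq_neg_one {n : Type*} {i j k l : n} (h₁ : ¬(i = j ∧ k = l))
    (h₂ : ¬(i = k ∧ j = l)) (h₃ : ¬(i = l ∧ j = k)) :
    ∃ ε : n → ℤˣ, ε i * ε j * (ε k * ε l) = -1 := by
  classical
  obtain rfl | hij := eq_or_ne i j
  · exact ⟨Pi.mulSingle k (-1), by simp_all [Pi.mulSingle_apply]⟩
  obtain rfl | hik := eq_or_ne i k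
  · exact ⟨Pi.mulSingle j (-1), by simp_all [eq_comm]⟩
  obtain rfl | hil := eq_or_ne i l
  · exact ⟨Pi.mulSingle j (-1), by simp_all [eq_comm]⟩
  · exact ⟨Pi.mulSingle i (-1), by simp_all [eq_comm]⟩

theorem eq_zero_of_perm_invariant {n M : Type*} [Fintype n] [AddCommMonoid M] [IsAddTorsionFree M]
    {f : n → n → M} (hf : ∀ (σ : Equiv.Perm n) i j, f (σ i) (σ j) = f i j)
    (hsum : ∑ i, ∑ j, f i j = 0) (hdiag : ∑ i, f i i = 0) : f = 0 := by
  classical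
  have hf_self (i : n) : f i i = 0 := by
    have hconst (k : n) : f k k = f i i := by
      rw [← hf (Equiv.swap i k), Equiv.swap_apply_right]
    rw [Finset.sum_congr rfl fun k _ => hconst k, Finset.sum_const] at hdiag
    exact (nsmul_eq_zero_iff_right (Finset.card_ne_zero_of_mem (Finset.mem_univ i))).1 hdiag
  ext i j
  obtain rfl | hij := eq_or_ne i j
  · exact hf_self i
  have hconst (p : n × n) (hp : p ∈ Finset.univ.offDiag) : f p.1 p.2 = f i j := by
    obtain ⟨σ, hi, hj⟩ := MulAction.is_two_pretransitive_iff.1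
      (Equiv.Perm.isMultiplyPretransitive n 2) hij (Finset.mem_offDiag.1 hp).2.2
    rw [← hi, ← hj]
    exact hf σ i j
  have hoff : ∑ p ∈ Finset.univ.offDiag, f p.1 p.2 = 0 := by
    rw [← Finset.sum_product', ← Finset.diag_union_offDiag,
      Finset.sum_union (Finset.disjoint_diag_offDiag _), Finset.sum_diag, hdiag, zero_add] at hsum
    exact hsum
  rw [Finset.sum_congr rfl hconst, Finset.sum_const] at hoff
  exact (nsmul_eq_zero_iff_right
    (Finset.card_ne_zero_of_mem (a := (i, j)) (by simpa using hij))).1 hoff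

section Observables

variable {n : Type*} [DecidableEq n]

variable (n) in
/-- The swap operator `W` of `ℂⁿ ⊗ ℂⁿ`. -/
def swapMatrix : Matrix (n × n) (n × n) ℂ :=
  (Equiv.prodComm n n).toPEquiv.toMatrix

variable (n) in
/-- The projection `Q` onto the span of the basis vectors `e_{(i,i)}`. -/
def diagProj : Matrix (n × n) (n × n) ℂ :=
  diagonal fun p => if p.1 = p.2 then 1 else 0

theorem swapMatrix_apply (i j k l : n) :
    swapMatrix n (i, j) (k, l) = if i = l ∧ j = k then 1 else 0 := by
  simp [swapMatrix, PEquiv.toMatrix_apply, and_comm]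

variable [Fintype n]

variable (n) in
/-- The projection `W₋` onto the antisymmetric subspace. -/
noncomputable def antisymmProj : Matrix (n × n) (n × n) ℂ :=
  (2 : ℝ)⁻¹ • (1 - swapMatrix n)

variable (n) in
/-- The maximally entangled state `Φ`. -/
noncomputable def maxEntangled : Matrix (n × n) (n × n) ℂ :=
  of fun p q => if p.1 = p.2 ∧ q.1 = q.2 then (Fintype.card n : ℂ)⁻¹ else 0

theorem maxEntangled_apply (i j k l : n) :
    maxEntangled n (i, j) (k, l) = if i = j ∧ k = l then (Fintype.card n : ℂ)⁻¹ else 0 :=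
  rfl

theorem expect_one (A : Matrix (n × n) (n × n) ℂ) :
    expect 1 A = ∑ i, ∑ j, A (i, j) (i, j) := by
  rw [expect_apply, Matrix.one_mul, trace, Fintype.sum_prod_type]
  rfl

theorem expect_swapMatrix (A : Matrix (n × n) (n × n) ℂ) :
    expect (swapMatrix n) A = ∑ i, ∑ j, A (i, j) (j, i) := by
  rw [expect_apply, swapMatrix, PEquiv.toMatrix_toPEquiv_mul, trace, Fintype.sum_prod_type_right]
  rfl

theorem expect_maxEntangled (A : Matrix (n × n) (n × n) ℂ) :
    expect (maxEntangled n) A = (Fintype.card n : ℂ)⁻¹ * ∑ i, ∑ j, A (i, i) (j, j) := by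
  rw [Finset.sum_comm]
  simp [expect_apply, trace, mul_apply, maxEntangled, Fintype.sum_prod_type, ite_and,
    Finset.mul_sum]

theorem expect_diagProj (A : Matrix (n × n) (n × n) ℂ) :
    expect (diagProj n) A = ∑ i, A (i, i) (i, i) := by
  simp [expect_apply, trace, diagProj, Fintype.sum_prod_type]

theorem wernerRep_swapMatrix (U : unitaryGroup n ℂ) :
    wernerRep n U (swapMatrix n) = swapMatrix n := by
  have hcomm : (U.1 ⊗ₖ U.1) * swapMatrix n = swapMatrix n * (U.1 ⊗ₖ U.1) := by
    ext
    simp [swapMatrix, PEquiv.mul_toMatrix_toPEquiv, PEquiv.toMatrix_toPEquiv_mul, mul_comm]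
  rw [wernerRep_apply, hcomm, Matrix.mul_assoc, ← star_eq_conjTranspose,
    Unitary.mul_star_self_of_mem (kronecker_mem_unitary U.2 U.2), Matrix.mul_one]

theorem wernerRep_one (U : unitaryGroup n ℂ) : wernerRep n U 1 = 1 := by
  rw [wernerRep_apply, Matrix.mul_one, ← star_eq_conjTranspose,
    Unitary.mul_star_self_of_mem (kronecker_mem_unitary U.2 U.2)]

theorem one_mem_signedPermInvariants : 1 ∈ signedPermInvariants n :=
  ⟨fun _ => wernerRep_one _, fun _ => wernerRep_one _⟩

theorem swapMatrix_mem_signedPermInvariants : swapMatrix n ∈ signedPermInvariants n :=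
  ⟨fun _ => wernerRep_swapMatrix _, fun _ => wernerRep_swapMatrix _⟩

theorem maxEntangled_mem_signedPermInvariants : maxEntangled n ∈ signedPermInvariants n := by
  refine mem_signedPermInvariants.2 ⟨fun ε => ?_, fun σ => ?_⟩ <;> ext ⟨i, j⟩ ⟨k, l⟩
  · rw [wernerRep_signUnitary_apply]
    by_cases h : i = j ∧ k = l <;> simp [maxEntangled, h]
  · simp [wernerRep_permUnitary_apply, maxEntangled]

theorem diagProj_mem_signedPermInvariants : diagProj n ∈ signedPermInvariants n := by
  refine mem_signedPermInvariants.2 ⟨fun ε => ?_, fun σ => ?_⟩ <;> ext ⟨i, j⟩ ⟨k, l⟩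
  · rw [wernerRep_signUnitary_apply]
    by_cases h : i = k ∧ j = l <;> simp [diagProj, h]
  · simp [wernerRep_permUnitary_apply, diagProj, diagonal_apply]

theorem eq_zero_of_mem_signedPermInvariants {A : Matrix (n × n) (n × n) ℂ}
    (hA : A ∈ signedPermInvariants n) (h_one : expect 1 A = 0)
    (h_swap : expect (swapMatrix n) A = 0) (h_max : expect (maxEntangled n) A = 0)
    (h_diag : expect (diagProj n) A = 0) : A = 0 := by
  obtain ⟨hsign, hperm⟩ := mem_signedPermInvariants.1 hA
  have hσ (σ : Equiv.Perm n) (i j k l : n) : A (σ i, σ j) (σ k, σ l) = A (i, j) (k, l) := by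
    conv_rhs => rw [← hperm σ⁻¹, wernerRep_permUnitary_apply, inv_inv]
  rw [expect_diagProj] at h_diag
  have h₁ : (fun i j => A (i, j) (i, j)) = 0 :=
    eq_zero_of_perm_invariant (fun σ i j => hσ σ i j i j) (by rwa [expect_one] at h_one) h_diag
  have h₂ : (fun i j => A (i, j) (j, i)) = 0 :=
    eq_zero_of_perm_invariant (fun σ i j => hσ σ i j j i) (by rwa [expect_swapMatrix] at h_swap)
      h_diag
  have h₃ : (fun i j => A (i, i) (j, j)) = 0 := by
    cases isEmpty_or_nonempty n
    · exact Subsingleton.elim _ _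
    · exact eq_zero_of_perm_invariant (fun σ i j => hσ σ i i j j)
        (by simpa [expect_maxEntangled] using h_max) h_diag
  ext ⟨i, j⟩ ⟨k, l⟩
  by_cases hij : i = j ∧ k = l
  · obtain ⟨rfl, rfl⟩ := hij
    exact congrFun₂ h₃ i k
  by_cases hik : i = k ∧ j = l
  · obtain ⟨rfl, rfl⟩ := hik
    exact congrFun₂ h₁ i j
  by_cases hil : i = l ∧ j = k
  · obtain ⟨rfl, rfl⟩ := hil
    exact congrFun₂ h₂ i j
  obtain ⟨ε, hε⟩ := exists_sign_mul_eq_neg_one hij hik hil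
  have hneg := congrFun₂ (hsign ε) (i, j) (k, l)
  rw [wernerRep_signUnitary_apply, hε] at hneg
  simpa [neg_eq_self] using hneg

end Observables

section OOState

theorem cast_card_sub_one_ne_zero (n R : Type*) [Fintype n] [Nontrivial n] [Ring R] [CharZero R] :
    (Fintype.card n : R) - 1 ≠ 0 :=
  sub_ne_zero.2 (Nat.cast_ne_one.2 Fintype.one_lt_card.ne')

variable {n : Type*} [Fintype n] [DecidableEq n]

variable (n) in
/-- The OO-invariant operator with `tr (ρ W₋) = a` and `tr (ρ Φ) = b`, normalised to unit trace. -/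
noncomputable def ooState (a b : ℝ) : Matrix (n × n) (n × n) ℂ :=
  (2 * a / (Fintype.card n * ((Fintype.card n : ℝ) - 1))) • antisymmProj n + b • maxEntangled n +
    ((1 - a - b) / ((Fintype.card n : ℝ) * ((Fintype.card n : ℝ) + 1) / 2 - 1)) •
      (1 - maxEntangled n - antisymmProj n)

theorem ooState_mem_signedPermInvariants (a b : ℝ) : ooState n a b ∈ signedPermInvariants n := by
  have hΦ := maxEntangled_mem_signedPermInvariants (n := n)
  have h1 := one_mem_signedPermInvariants (n := n)
  have hP : antisymmProj n ∈ signedPermInvariants n :=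
    Submodule.smul_mem _ _ (sub_mem h1 swapMatrix_mem_signedPermInvariants)
  exact add_mem (add_mem (Submodule.smul_mem _ _ hP) (Submodule.smul_mem _ _ hΦ))
    (Submodule.smul_mem _ _ (sub_mem (sub_mem h1 hΦ) hP))

theorem expect_ooState (X : Matrix (n × n) (n × n) ℂ) (a b : ℝ) :
    letI d : ℂ := Fintype.card n
    expect X (ooState n a b) = a / (d * (d - 1)) * (expect X 1 - expect X (swapMatrix n)) +
      b * expect X (maxEntangled n) + (1 - a - b) / ((d - 1) * (d + 2)) *
        (expect X 1 - 2 * expect X (maxEntangled n) + expect X (swapMatrix n)) := by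
  have hfactor : (Fintype.card n : ℂ) * (Fintype.card n + 1) / 2 - 1 =
      (Fintype.card n - 1) * (Fintype.card n + 2) / 2 := by ring
  simp only [ooState, antisymmProj, map_add, map_sub, map_smul, Complex.real_smul]
  push_cast
  rw [hfactor]
  field

variable [Nontrivial n]

theorem expect_one_ooState (a b : ℝ) : expect 1 (ooState n a b) = 1 := by
  have hd1 := cast_card_sub_one_ne_zero n ℂ
  have hd2 : (Fintype.card n : ℂ) + 2 ≠ 0 := by norm_cast
  have h_one : expect (1 : Matrix (n × n) (n × n) ℂ) 1 = (Fintype.card n : ℂ) ^ 2 := by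
    simp [expect_one, sq]
  have h_swap : expect 1 (swapMatrix n) = Fintype.card n := by
    simp [expect_one, swapMatrix_apply, eq_comm]
  have h_max : expect 1 (maxEntangled n) = 1 := by
    simp [expect_one, maxEntangled_apply]
  rw [expect_ooState, h_one, h_swap, h_max]
  field_simp
  ring

theorem expect_swapMatrix_ooState (a b : ℝ) :
    expect (swapMatrix n) (ooState n a b) = 1 - 2 * a := by
  have hd1 := cast_card_sub_one_ne_zero n ℂ
  have hd2 : (Fintype.card n : ℂ) + 2 ≠ 0 := by norm_cast
  have h_one : expect (swapMatrix n) 1 = Fintype.card n := by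
    simp [expect_swapMatrix, one_apply, ite_and]
  have h_swap : expect (swapMatrix n) (swapMatrix n) = (Fintype.card n : ℂ) ^ 2 := by
    simp [expect_swapMatrix, swapMatrix_apply, sq]
  have h_max : expect (swapMatrix n) (maxEntangled n) = 1 := by
    simp [expect_swapMatrix, maxEntangled_apply, ite_and]
  rw [expect_ooState, h_one, h_swap, h_max]
  field_simp
  ring

theorem expect_maxEntangled_ooState (a b : ℝ) :
    expect (maxEntangled n) (ooState n a b) = b := by
  have h_one : expect (maxEntangled n) 1 = 1 := by
    simp [expect_maxEntangled, one_apply]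
  have h_swap : expect (maxEntangled n) (swapMatrix n) = 1 := by
    simp [expect_maxEntangled, swapMatrix_apply]
  have h_max : expect (maxEntangled n) (maxEntangled n) = 1 := by
    simp [expect_maxEntangled, maxEntangled_apply]
  rw [expect_ooState, h_one, h_swap, h_max]
  ring

theorem expect_diagProj_ooState (a b : ℝ) :
    expect (diagProj n) (ooState n a b) =
      (2 * (1 - a) + Fintype.card n * b) / (Fintype.card n + 2) := by
  have hd1 := cast_card_sub_one_ne_zero n ℂ
  have hd2 : (Fintype.card n : ℂ) + 2 ≠ 0 := by norm_cast
  have h_one : expect (diagProj n) 1 = Fintype.card n := by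
    simp [expect_diagProj]
  have h_swap : expect (diagProj n) (swapMatrix n) = Fintype.card n := by
    simp [expect_diagProj, swapMatrix_apply]
  have h_max : expect (diagProj n) (maxEntangled n) = 1 := by
    simp [expect_diagProj, maxEntangled_apply]
  rw [expect_ooState, h_one, h_swap, h_max]
  field_simp
  ring

end OOState

theorem exists_isotropic_of_one_lt_card {n : Type*} [Fintype n] [DecidableEq n] {s : Finset n}
    (hs : 1 < s.card) :
    ∃ w : n → ℂ, (∀ i, ‖w i‖ = if i ∈ s then 1 else 0) ∧ ∑ i, w i ^ 2 = 0 := by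
  let ζ : ℂ := Complex.exp (Real.pi * Complex.I / s.card)
  have hζ : IsPrimitiveRoot (ζ ^ 2) s.card := by
    convert Complex.isPrimitiveRoot_exp s.card (by omega) using 1
    rw [← Complex.exp_nat_mul]
    push_cast
    ring_nf
  have hζ_norm : ‖ζ‖ = 1 :=
    Complex.norm_eq_one_of_pow_eq_one (n := 2 * s.card) (by rw [pow_mul, hζ.pow_eq_one]) (by omega)
  refine ⟨fun i => if h : i ∈ s then ζ ^ (s.equivFin ⟨i, h⟩ : ℕ) else 0, fun i => ?_, ?_⟩
  · by_cases hi : i ∈ s <;> simp [hi, hζ_norm]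
  · calc ∑ i, (if h : i ∈ s then ζ ^ (s.equivFin ⟨i, h⟩ : ℕ) else 0) ^ 2
        = ∑ i : s, (ζ ^ 2) ^ (s.equivFin i : ℕ) := by
          rw [← Finset.sum_subset s.subset_univ fun i _ hi => by simp [hi], ← Finset.sum_coe_sort]
          simp [pow_right_comm]
      _ = ∑ k : Fin s.card, (ζ ^ 2) ^ (k : ℕ) :=
          s.equivFin.sum_comp fun k : Fin s.card => (ζ ^ 2) ^ (k : ℕ)
      _ = 0 := by rw [Fin.sum_univ_eq_sum_range ((ζ ^ 2) ^ ·), hζ.geom_sum_eq_zero hs]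

section OrbitPoints

variable {n : Type*} [Fintype n] [DecidableEq n] {z o : n}

theorem exists_unitaryGroup_two_columns (hzo : z ≠ o) {u v : EuclideanSpace ℂ n} (hu : ‖u‖ = 1)
    (hv : ‖v‖ = 1) (huv : inner ℂ u v = 0) :
    ∃ U : unitaryGroup n ℂ, (∀ i, U.1 i z = u i) ∧ ∀ i, U.1 i o = v i := by
  let w : n → EuclideanSpace ℂ n := fun k => if k = z then u else v
  have hw : Orthonormal ℂ (Set.domRestrict {z, o} w) := by
    refine ⟨?_, ?_⟩
    · rintro ⟨k, rfl | rfl⟩ <;> simp [w, hu, hv, hzo.symm]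
    · rintro ⟨k, rfl | rfl⟩ ⟨l, rfl | rfl⟩ hkl <;>
        simp_all [w, inner_eq_zero_symm, hzo.symm]
  obtain ⟨b, hb⟩ := hw.exists_orthonormalBasis_extension_of_card_eq finrank_euclideanSpace
  refine ⟨⟨_, (EuclideanSpace.basisFun n ℂ).toMatrix_orthonormalBasis_mem_unitary b⟩, fun i => ?_,
    fun i => ?_⟩
  · simp [Module.Basis.toMatrix_apply, hb z, w]
  · simp [Module.Basis.toMatrix_apply, hb o, w, hzo.symm]

/-- The vector `α e_{(z,o)} - β e_{(o,z)}`. -/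
noncomputable def antisymmPair (z o : n) (α β : ℝ) : n × n → ℂ :=
  Pi.single (z, o) (α : ℂ) - Pi.single (o, z) (β : ℂ)

theorem kronecker_mulVec_antisymmPair (α β : ℝ) (U : Matrix n n ℂ) (i j : n) :
    ((U ⊗ₖ U) *ᵥ antisymmPair z o α β) (i, j) = α * (U i z * U j o) - β * (U i o * U j z) := by
  simp [antisymmPair, mulVec_sub]

theorem antisymmPair_dotProduct_star (hzo : z ≠ o) (α β γ δ : ℝ) :
    antisymmPair z o α β ⬝ᵥ star (antisymmPair z o γ δ) = α * γ + β * δ := by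
  simp [antisymmPair, hzo, hzo.symm]

theorem swapMatrix_mulVec_antisymmPair (α β : ℝ) :
    swapMatrix n *ᵥ antisymmPair z o α β = -antisymmPair z o β α := by
  ext ⟨i, j⟩
  simp [swapMatrix, PEquiv.toMatrix_toPEquiv_mulVec, antisymmPair, Pi.single_apply, and_comm]

theorem expect_one_of_mem_convexHull (hzo : z ≠ o) {α β : ℝ} {A : Matrix (n × n) (n × n) ℂ}
    (hA : A ∈ convexHull ℝ (wernerOrbit (antisymmPair z o α β))) :
    expect 1 A = α ^ 2 + β ^ 2 := by
  rw [expect_eq_of_mem_convexHull_wernerOrbit wernerRep_one hA, expect_vecMulVec, one_mulVec,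
    antisymmPair_dotProduct_star hzo, sq, sq]

theorem expect_swapMatrix_of_mem_convexHull (hzo : z ≠ o) {α β : ℝ} {A : Matrix (n × n) (n × n) ℂ}
    (hA : A ∈ convexHull ℝ (wernerOrbit (antisymmPair z o α β))) :
    expect (swapMatrix n) A = -2 * (α * β) := by
  rw [expect_eq_of_mem_convexHull_wernerOrbit wernerRep_swapMatrix hA, expect_vecMulVec,
    swapMatrix_mulVec_antisymmPair, neg_dotProduct, antisymmPair_dotProduct_star hzo]
  ring

/-- The pairs of expectations of `Φ` and `Q` attained on the convex hull of the Werner orbit of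
`α e_{(z,o)} - β e_{(o,z)}`. -/
def attainable (z o : n) (α β : ℝ) : Set (ℝ × ℝ) :=
  {p | ∃ A ∈ convexHull ℝ (wernerOrbit (antisymmPair z o α β)),
    expect (maxEntangled n) A = p.1 ∧ expect (diagProj n) A = p.2}

theorem convex_attainable (z o : n) (α β : ℝ) : Convex ℝ (attainable z o α β) := by
  rintro p ⟨A, hA, hAΦ, hAQ⟩ q ⟨B, hB, hBΦ, hBQ⟩ s t hs ht hst
  exact ⟨s • A + t • B, convex_convexHull ℝ _ hA hB hs ht hst, by simp [hAΦ, hBΦ],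
    by simp [hAQ, hBQ]⟩

theorem expect_maxEntangled_vecMulVec (ψ : n × n → ℂ) :
    expect (maxEntangled n) (vecMulVec ψ (star ψ)) =
      ((‖∑ i, ψ (i, i)‖ ^ 2 / Fintype.card n : ℝ) : ℂ) := by
  push_cast
  rw [expect_maxEntangled, ← Complex.mul_conj', map_sum, Finset.sum_mul_sum, inv_mul_eq_div]
  rfl

theorem expect_diagProj_vecMulVec (ψ : n × n → ℂ) :
    expect (diagProj n) (vecMulVec ψ (star ψ)) = ((∑ i, ‖ψ (i, i)‖ ^ 2 : ℝ) : ℂ) := by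
  push_cast
  simp only [expect_diagProj, ← Complex.mul_conj']
  rfl

theorem mem_attainable (hzo : z ≠ o) (α β : ℝ) {u v : EuclideanSpace ℂ n} {N : ℝ} (hN : 0 < N)
    (hu : ‖u‖ ^ 2 = N) (hv : ‖v‖ ^ 2 = N) (huv : inner ℂ u v = 0) :
    ((α - β) ^ 2 / Fintype.card n * (‖∑ i, u i * v i‖ ^ 2 / N ^ 2),
      (α - β) ^ 2 * ((∑ i, ‖u i * v i‖ ^ 2) / N ^ 2)) ∈ attainable z o α β := by
  have hu0 : u ≠ 0 := by rintro rfl; simp [hN.ne] at hu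
  have hv0 : v ≠ 0 := by rintro rfl; simp [hN.ne] at hv
  obtain ⟨U, hUz, hUo⟩ := exists_unitaryGroup_two_columns hzo
    (u := (‖u‖⁻¹ : ℂ) • u) (v := (‖v‖⁻¹ : ℂ) • v) (by simp [norm_smul, hu0])
    (by simp [norm_smul, hv0]) (by simp [huv])
  have hnorm : ‖u‖ * ‖v‖ = N := by
    rw [(sq_eq_sq₀ (norm_nonneg v) (norm_nonneg u)).1 (hv.trans hu.symm), ← sq, hu]
  have hdiag (i : n) : ((U.1 ⊗ₖ U.1) *ᵥ antisymmPair z o α β) (i, i) =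
      ((α - β) / N : ℝ) * (u i * v i) := by
    rw [kronecker_mulVec_antisymmPair, hUz, hUo, ← hnorm]
    simp only [PiLp.smul_apply, smul_eq_mul]
    push_cast
    ring
  refine ⟨_, subset_convexHull ℝ _ ⟨U, rfl⟩, ?_, ?_⟩
  · simp only [expect_maxEntangled_vecMulVec, hdiag, ← Finset.mul_sum, norm_mul,
      Complex.norm_real, mul_pow, Real.norm_eq_abs, sq_abs, div_pow]
    congr 1
    ring
  · simp only [expect_diagProj_vecMulVec, hdiag, norm_mul (Complex.ofReal _),
      Complex.norm_real, mul_pow, Real.norm_eq_abs, sq_abs, div_pow, ← Finset.mul_sum]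
    congr 1
    ring

theorem zero_mem_attainable (hzo : z ≠ o) (α β : ℝ) : (0, 0) ∈ attainable z o α β := by
  simpa [apply_ite norm, ite_pow, hzo.symm] using
    mem_attainable hzo α β (u := EuclideanSpace.single z 1) (v := EuclideanSpace.single o 1)
      one_pos (by simp) (by simp) (by simp [EuclideanSpace.inner_single_left, hzo])

theorem isotropic_mem_attainable (hzo : z ≠ o) (α β : ℝ) {s : Finset n} (hs : 1 < s.card) :
    (0, (α - β) ^ 2 / s.card) ∈ attainable z o α β ∧
      ((α - β) ^ 2 / Fintype.card n, (α - β) ^ 2 / s.card) ∈ attainable z o α β := by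
  obtain ⟨w, hw_norm, hw_sq⟩ := exists_isotropic_of_one_lt_card hs
  have hs0 : (0 : ℝ) < s.card := by exact_mod_cast hs.pos
  have hw_mul (i : n) : (‖w i‖ : ℂ) * w i ^ 2 = w i ^ 2 := by
    by_cases hi : i ∈ s
    · simp [hw_norm, hi]
    · simp [norm_eq_zero.1 ((hw_norm i).trans (if_neg hi))]
  have hcard (x : ℝ) : x * (s.card / s.card ^ 2) = x / s.card := by field_simp
  have hnorm {u : n → ℂ} (hu : ∀ i, ‖u i‖ ^ 2 = if i ∈ s then 1 else 0) :
      ‖WithLp.toLp 2 u‖ ^ 2 = s.card := by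
    simp [EuclideanSpace.norm_sq_eq, hu]
  constructor
  · have h := mem_attainable hzo α β (u := .toLp 2 fun i => (‖w i‖ : ℂ))
      (v := .toLp 2 fun i => w i ^ 2) hs0 (hnorm <| by simp [hw_norm]) (hnorm <| by simp [hw_norm])
      (by simp [PiLp.inner_apply, mul_comm, hw_mul, hw_sq])
    simp only [hw_mul, hw_sq] at h
    simpa [hw_norm, hcard] using h
  · have h := mem_attainable hzo α β (u := .toLp 2 w) (v := .toLp 2 (star w)) hs0
      (hnorm <| by simp [hw_norm]) (hnorm <| by simp [hw_norm])
      (by simp [PiLp.inner_apply, ← sq, ← map_pow, ← map_sum, hw_sq])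
    have hsum : ∑ i, w i * starRingEnd ℂ (w i) = s.card := by
      simp [Complex.mul_conj', hw_norm, apply_ite Complex.ofReal]
    simpa [hsum, hw_norm, hcard, hs0.ne'] using h

end OrbitPoints

section Mixing

variable {n : Type*} [Fintype n] [DecidableEq n] {z o : n}

theorem mem_attainable_of_mem_Icc (hzo : z ≠ o) {α β b : ℝ}
    (hb : b ∈ Set.Icc 0 ((α - β) ^ 2 / Fintype.card n)) :
    (b, ((α - β) ^ 2 + Fintype.card n * b) / (Fintype.card n + 2)) ∈ attainable z o α β := by
  have : Nontrivial n := ⟨z, o, hzo⟩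
  have hd : (0 : ℝ) < Fintype.card n := Nat.cast_pos.2 Fintype.card_pos
  have hconv := convex_attainable z o α β
  obtain ⟨h_iso_zero, h_iso⟩ := isotropic_mem_attainable hzo α β (s := Finset.univ)
    Fintype.one_lt_card
  obtain ⟨-, h_pair⟩ := isotropic_mem_attainable hzo α β (s := {z, o}) (by simp [hzo])
  rw [Finset.card_univ] at h_iso_zero h_iso
  rw [Finset.card_pair hzo, Nat.cast_ofNat] at h_pair
  have hweight : (2 : ℝ) / (Fintype.card n + 2) + Fintype.card n / (Fintype.card n + 2) = 1 := by
    field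
  have h_left : (0, (α - β) ^ 2 / (Fintype.card n + 2)) ∈ attainable z o α β := by
    convert hconv (zero_mem_attainable hzo α β) h_iso_zero (by positivity) (by positivity) hweight
      using 1
    simp only [Prod.smul_mk, Prod.mk_add_mk, smul_eq_mul]
    congr 1 <;> field
  have h_right : ((α - β) ^ 2 / Fintype.card n, 2 * (α - β) ^ 2 / (Fintype.card n + 2)) ∈
      attainable z o α β := by
    convert hconv h_pair h_iso (by positivity) (by positivity) hweight using 1
    simp only [Prod.smul_mk, Prod.mk_add_mk, smul_eq_mul]
    congr 1 <;> field
  rw [← segment_eq_Icc (by positivity)] at hb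
  obtain ⟨s, t, hs, ht, hst, rfl⟩ := hb
  convert hconv h_left h_right hs ht hst using 1
  obtain rfl : s = 1 - t := by linarith
  simp only [Prod.smul_mk, Prod.mk_add_mk, smul_eq_mul]
  congr 1
  field

theorem ooState_mem_convexHull_wernerOrbit (hzo : z ≠ o) {a b α β : ℝ}
    (h_norm : α ^ 2 + β ^ 2 = 1) (h_mul : α * β = a - 1 / 2)
    (hb : b ∈ Set.Icc 0 (2 * (1 - a) / Fintype.card n)) :
    ooState n a b ∈ convexHull ℝ (wernerOrbit (antisymmPair z o α β)) := by
  have : Nontrivial n := ⟨z, o, hzo⟩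
  have hδ : (α - β) ^ 2 = 2 * (1 - a) := by linarith [sub_sq α β]
  obtain ⟨A, hA, hAΦ, hAQ⟩ := mem_attainable_of_mem_Icc hzo (hδ ▸ hb)
  have hA_one : expect 1 A = 1 := by
    rw [expect_one_of_mem_convexHull hzo hA]
    exact_mod_cast h_norm
  have hA_swap : expect (swapMatrix n) A = 1 - 2 * a := by
    rw [expect_swapMatrix_of_mem_convexHull hzo hA, ← Complex.ofReal_mul, h_mul]
    push_cast
    ring
  rw [hδ] at hAQ
  obtain ⟨B, hB, hB_inv, hB_expect⟩ := exists_mem_signedPermInvariants (convex_convexHull ℝ _)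
    (mapsTo_wernerRep_convexHull_wernerOrbit _) hA
  suffices ooState n a b = B by rwa [this]
  refine sub_eq_zero.1 <| eq_zero_of_mem_signedPermInvariants
    (sub_mem (ooState_mem_signedPermInvariants a b) hB_inv) ?_ ?_ ?_ ?_ <;>
    rw [map_sub, sub_eq_zero]
  · rw [hB_expect _ one_mem_signedPermInvariants, hA_one, expect_one_ooState]
  · rw [hB_expect _ swapMatrix_mem_signedPermInvariants, hA_swap, expect_swapMatrix_ooState]
  · rw [hB_expect _ maxEntangled_mem_signedPermInvariants, hAΦ, expect_maxEntangled_ooState]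
  · rw [hB_expect _ diagProj_mem_signedPermInvariants, hAQ, expect_diagProj_ooState]
    push_cast
    rfl

theorem sqrt_half_add_sub_mul {a : ℝ} (ha : a ∈ Set.Icc (1 / 2 : ℝ) 1) :
    √(1 / 2 + √(a * (1 - a))) ^ 2 + √(1 / 2 - √(a * (1 - a))) ^ 2 = 1 ∧
      √(1 / 2 + √(a * (1 - a))) * √(1 / 2 - √(a * (1 - a))) = a - 1 / 2 := by
  have hprod : 0 ≤ a * (1 - a) := mul_nonneg (by linarith [ha.1]) (by linarith [ha.2])
  have hle : √(a * (1 - a)) ≤ 1 / 2 :=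
    Real.sqrt_le_iff.2 ⟨by norm_num, by linarith [sq_nonneg (a - 1 / 2)]⟩
  have hadd : 0 ≤ 1 / 2 + √(a * (1 - a)) := by positivity
  refine ⟨?_, ?_⟩
  · rw [Real.sq_sqrt hadd, Real.sq_sqrt (by linarith)]
    ring
  · rw [← Real.sqrt_mul hadd, ← sq_sub_sq, Real.sq_sqrt hprod,
      show (1 / 2) ^ 2 - a * (1 - a) = (a - 1 / 2) ^ 2 by ring, Real.sqrt_sq (by linarith [ha.1])]

end Mixing

/-- For `a ∈ [1/2,1]` and `b ∈ [0, 2(1−a)/d]`, the OO-invariant state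
`ρ = (2a/(d(d−1)))W₋ + bΦ_d + ((1−a−b)/(d(d+1)/2 − 1))(𝟙 − Φ_d − W₋)` lies in the
convex hull of the Werner orbit of the minimizing pure state
`ψ_a = √(1/2+√(a(1−a)))|01⟩ − √(1/2−√(a(1−a)))|10⟩`. -/
theorem ooInvariant_mem_convexHull_wernerOrbit (d : ℕ) (hd : 2 ≤ d)
    (a b : ℝ) (ha : a ∈ Set.Icc (1 / 2 : ℝ) 1)
    (hb : b ∈ Set.Icc (0 : ℝ) (2 * (1 - a) / d))
    (W : Matrix (Fin d × Fin d) (Fin d × Fin d) ℂ)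
    (hW : ∀ p q, W p q = if p.1 = q.2 ∧ p.2 = q.1 then 1 else 0)
    (Wm : Matrix (Fin d × Fin d) (Fin d × Fin d) ℂ)
    (hWm : Wm = (2 : ℝ)⁻¹ • (1 - W))
    (Φ : Matrix (Fin d × Fin d) (Fin d × Fin d) ℂ)
    (hΦ : ∀ p q, Φ p q = if p.1 = p.2 ∧ q.1 = q.2 then ((d : ℂ))⁻¹ else 0)
    (ψa : Fin d × Fin d → ℂ)
    (hψa : ψa = fun p =>
      (if p = ((⟨0, by omega⟩ : Fin d), (⟨1, by omega⟩ : Fin d)) then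
          ((Real.sqrt (1 / 2 + Real.sqrt (a * (1 - a))) : ℝ) : ℂ) else 0)
      - (if p = ((⟨1, by omega⟩ : Fin d), (⟨0, by omega⟩ : Fin d)) then
          ((Real.sqrt (1 / 2 - Real.sqrt (a * (1 - a))) : ℝ) : ℂ) else 0)) :
    (2 * a / (d * ((d : ℝ) - 1))) • Wm + b • Φ
        + ((1 - a - b) / ((d : ℝ) * ((d : ℝ) + 1) / 2 - 1)) • (1 - Φ - Wm) ∈
      convexHull ℝ { A : Matrix (Fin d × Fin d) (Fin d × Fin d) ℂ |
        ∃ U : Matrix.unitaryGroup (Fin d) ℂ,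
          A = Matrix.vecMulVec
            ((Matrix.kroneckerMap (· * ·) (U : Matrix (Fin d) (Fin d) ℂ)
              (U : Matrix (Fin d) (Fin d) ℂ)).mulVec ψa)
            (star ((Matrix.kroneckerMap (· * ·) (U : Matrix (Fin d) (Fin d) ℂ)
              (U : Matrix (Fin d) (Fin d) ℂ)).mulVec ψa)) } := by
  obtain ⟨h_norm, h_mul⟩ := sqrt_half_add_sub_mul ha
  have hzo : (⟨0, by omega⟩ : Fin d) ≠ ⟨1, by omega⟩ := by simp
  have hW' : W = swapMatrix (Fin d) := by
    ext ⟨i, j⟩ ⟨k, l⟩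
    rw [hW, swapMatrix_apply]
  have hΦ' : Φ = maxEntangled (Fin d) := by
    ext ⟨i, j⟩ ⟨k, l⟩
    rw [hΦ, maxEntangled_apply, Fintype.card_fin]
  have hψa' : ψa = antisymmPair ⟨0, by omega⟩ ⟨1, by omega⟩ (√(1 / 2 + √(a * (1 - a))))
      (√(1 / 2 - √(a * (1 - a)))) := by
    ext p
    simp only [hψa, antisymmPair, Pi.sub_apply, Pi.single_apply]
  have key := ooState_mem_convexHull_wernerOrbit hzo h_norm h_mul
    (by rwa [Fintype.card_fin] : b ∈ Set.Icc 0 (2 * (1 - a) / Fintype.card (Fin d)))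
  rw [ooState, Fintype.card_fin] at key
  rw [hWm, hW', hΦ', hψa']
  exact key
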